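/- Let f : Q0 = [0,1]^n → [0,∞) be integrable. Then for every t ∈ (0,1] and every γ > 1 with t/γ ∈ (0,1], f^{**}(t/γ) ≤ (1 + 2^{n−1} γ v(f; σ_t)) · f^{**}(t), where σ_t = min(2 t^{1/n}, 1). -/

import Mathlib

open MeasureTheory Set Real

noncomputable section

/-- The unit cube `Q₀ = [0,1]ⁿ` in `ℝⁿ`. -/
def Q0 (n : ℕ) : Set (Fin n → ℝ) := Set.Icc 0 1

/-- The integral average `f_Q = (1/|Q|) ∫_Q f` of `f` over `Q`. -/
def avgOn {n : ℕ} (f : (Fin n → ℝ) → ℝ) (Q : Set (Fin n → ℝ)) : ℝ :=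
  (volume Q).toReal⁻¹ * ∫ x in Q, f x

/-- The mean oscillation `Ω(f,Q) = (1/|Q|) ∫_Q |f - f_Q|` of `f` over `Q`. -/
def oscOn {n : ℕ} (f : (Fin n → ℝ) → ℝ) (Q : Set (Fin n → ℝ)) : ℝ :=
  (volume Q).toReal⁻¹ * ∫ x in Q, |f x - avgOn f Q|

/-- `Q` is a dyadic subcube of `[0,1]ⁿ` of side length `2⁻ᵏ`,
i.e. `Q = ∏ᵢ [mᵢ 2⁻ᵏ, (mᵢ+1) 2⁻ᵏ]` with `0 ≤ mᵢ < 2ᵏ`. -/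
def IsDyadicSide (n k : ℕ) (Q : Set (Fin n → ℝ)) : Prop :=
  ∃ m : Fin n → ℕ, (∀ i, m i < 2 ^ k) ∧
    Q = Set.Icc (fun i => (m i : ℝ) / 2 ^ k) (fun i => ((m i : ℝ) + 1) / 2 ^ k)

/-- `Q` belongs to the family `𝒟` of dyadic subcubes of `[0,1]ⁿ`. -/
def IsDyadic (n : ℕ) (Q : Set (Fin n → ℝ)) : Prop := ∃ k, IsDyadicSide n k Q

/-- One-dimensional integral average `g_J` over a set `J ⊆ ℝ`. -/
def avgI (g : ℝ → ℝ) (J : Set ℝ) : ℝ := (volume J).toReal⁻¹ * ∫ u in J, g u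

/-- One-dimensional mean oscillation `Ω(g,J)` over a set `J ⊆ ℝ`. -/
def oscI (g : ℝ → ℝ) (J : Set ℝ) : ℝ :=
  (volume J).toReal⁻¹ * ∫ u in J, |g u - avgI g J|

/-- `g : (0,1] → ℝ` is the nonincreasing, left-continuous rearrangement of
`f : [0,1]ⁿ → ℝ`, i.e. it is nonincreasing, left continuous and equimeasurable with `f`. -/
def IsRearrangement {n : ℕ} (f : (Fin n → ℝ) → ℝ) (g : ℝ → ℝ) : Prop :=
  AntitoneOn g (Set.Ioc 0 1) ∧
  (∀ t ∈ Set.Ioc (0:ℝ) 1, ContinuousWithinAt g (Set.Iio t) t) ∧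
  ∀ lam : ℝ, volume {t ∈ Set.Ioc (0:ℝ) 1 | lam < g t} = volume {x ∈ Q0 n | lam < f x}

/-- The Hardy average `F(t) = (1/t) ∫_0^t g(u) du`. -/
def hardyAvg (g : ℝ → ℝ) (t : ℝ) : ℝ := t⁻¹ * ∫ u in Set.Ioc (0:ℝ) t, g u

/-- The Gurov–Reshetnyak modulus
`v(f;σ) = sup { Ω(f,Q)/f_Q : Q ∈ 𝒟, ℓ(Q) ≤ σ, f_Q > 0 }` (equal to `0` if no such `Q` exists,
by the convention `sSup ∅ = 0` in `ℝ`). -/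
def vGR {n : ℕ} (f : (Fin n → ℝ) → ℝ) (σ : ℝ) : ℝ :=
  sSup {r : ℝ | ∃ k Q, IsDyadicSide n k Q ∧ ((2:ℝ) ^ k)⁻¹ ≤ σ ∧
    0 < avgOn f Q ∧ r = oscOn f Q / avgOn f Q}

/-- `f` satisfies the dyadic Gurov–Reshetnyak condition `f ∈ GR_𝒟(Q₀,ε)`:
`f : Q₀ → [0,∞)` is integrable and `Ω(f,Q) ≤ ε f_Q` for every dyadic cube `Q`. -/
def GRcond {n : ℕ} (f : (Fin n → ℝ) → ℝ) (ε : ℝ) : Prop :=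
  IntegrableOn f (Q0 n) ∧ (∀ x ∈ Q0 n, 0 ≤ f x) ∧
    ∀ Q, IsDyadic n Q → oscOn f Q ≤ ε * avgOn f Q

/-!
Write `A = f**(t)`. By equimeasurability `f` has average at most `A` over every set of measure at
least `t`. Stop at the maximal dyadic cubes `P` having a child on which the average of `f`
exceeds `A`; by Lebesgue differentiation they cover almost all of `{f > A}`. The average of `f`
over the union of these disjoint children exceeds `A`, so their total measure is at most `t`;
in particular `P` has side at most `σ_t`. By maximality the average over `P` is at most `A`, hence
`∫_P (f - A)⁺ ≤ ½ Ω(f,P) |P| ≤ ½ v(f;σ_t) A · 2ⁿ |child|`, and summing over `P` gives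
`∫ (f - A)⁺ ≤ 2ⁿ⁻¹ v(f;σ_t) A t`. The left side is also the integral of `(f* - A)⁺`, and
`f**(t/γ) ≤ A + (γ/t) ∫ (f* - A)⁺`.
-/

open BoxIntegral Filter ProbabilityTheory Topology

section SetIntegral

variable {α : Type*} [MeasurableSpace α] {μ : Measure α} {f : α → ℝ} {U V : Set α}

lemma integrableOn_max_sub_const (hf : IntegrableOn f V μ) (hV : μ V ≠ ⊤) (c : ℝ) :
    IntegrableOn (fun x ↦ max (f x - c) 0) V μ :=
  (hf.sub (integrableOn_const hV)).pos_part

lemma setIntegral_le_mul_measureReal_add (hUV : U ⊆ V) (hV : μ V ≠ ⊤)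
    (hf : IntegrableOn f V μ) (c : ℝ) :
    ∫ x in U, f x ∂μ ≤ c * μ.real U + ∫ x in V, max (f x - c) 0 ∂μ := by
  have hU : μ U ≠ ⊤ := measure_ne_top_of_subset hUV hV
  have hfU : IntegrableOn f U μ := hf.mono_set hUV
  have hmax : IntegrableOn (fun x ↦ max (f x - c) 0) V μ := integrableOn_max_sub_const hf hV c
  have hexcess : ∫ x in U, (f x - c) ∂μ ≤ ∫ x in V, max (f x - c) 0 ∂μ :=
    calc ∫ x in U, (f x - c) ∂μ
        ≤ ∫ x in U, max (f x - c) 0 ∂μ :=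
          integral_mono (hfU.sub (integrableOn_const hU)) (hmax.mono_set hUV)
            fun _ ↦ le_max_left _ _
      _ ≤ ∫ x in V, max (f x - c) 0 ∂μ :=
          setIntegral_mono_set hmax (.of_forall fun _ ↦ le_max_right _ _) hUV.eventuallyLE
  rw [integral_sub hfU (integrableOn_const hU), setIntegral_const, smul_eq_mul] at hexcess
  linarith

lemma setIntegral_le_of_forall_sum_le {ι : Type*} [Countable ι] {E : ι → Set α} {C : ℝ}
    (hV : MeasurableSet V) (hf : IntegrableOn f V μ) (hE : ∀ i, MeasurableSet (E i))
    (hEV : ∀ i, E i ⊆ V) (hdisj : Pairwise (Function.onFun Disjoint E))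
    (hzero : ∀ᵐ x ∂μ, x ∈ V \ ⋃ i, E i → f x = 0)
    (hC : ∀ S : Finset ι, ∑ i ∈ S, ∫ x in E i, f x ∂μ ≤ C) :
    ∫ x in V, f x ∂μ ≤ C := by
  have hsub : ⋃ i, E i ⊆ V := iUnion_subset hEV
  rw [setIntegral_eq_of_subset_of_ae_sdiff_eq_zero hV.nullMeasurableSet hsub hzero]
  exact le_of_tendsto' (hasSum_integral_iUnion hE hdisj (hf.mono_set hsub)) hC

lemma sum_measureReal_le_of_lt_setIntegral {ι : Type*} {E : ι → Set α} {a t : ℝ}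
    (hlarge : ∀ U ⊆ V, t ≤ μ.real U → ∫ x in U, f x ∂μ ≤ a * μ.real U)
    (hf : IntegrableOn f V μ) (hV : μ V ≠ ⊤) (ht : 0 ≤ t) (S : Finset ι)
    (hE : ∀ i ∈ S, MeasurableSet (E i)) (hEV : ∀ i ∈ S, E i ⊆ V)
    (hdisj : (S : Set ι).PairwiseDisjoint E)
    (hlt : ∀ i ∈ S, a * μ.real (E i) < ∫ x in E i, f x ∂μ) :
    ∑ i ∈ S, μ.real (E i) ≤ t := by
  rcases S.eq_empty_or_nonempty with rfl | hS
  · simpa using ht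
  by_contra! hgt
  have hvol : μ.real (⋃ i ∈ S, E i) = ∑ i ∈ S, μ.real (E i) :=
    measureReal_biUnion_finset hdisj hE fun i hi ↦ measure_ne_top_of_subset (hEV i hi) hV
  have hint : ∫ x in ⋃ i ∈ S, E i, f x ∂μ = ∑ i ∈ S, ∫ x in E i, f x ∂μ :=
    integral_biUnion_finset S hE hdisj fun i hi ↦ hf.mono_set (hEV i hi)
  have hle := hlarge (⋃ i ∈ S, E i) (iUnion₂_subset hEV) (hvol ▸ hgt.le)
  rw [hvol, hint, Finset.mul_sum] at hle
  exact (Finset.sum_lt_sum_of_nonempty hS hlt).not_ge hle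

end SetIntegral

section MeanOscillation

variable {n : ℕ} {f : (Fin n → ℝ) → ℝ} {Q R : Set (Fin n → ℝ)}

lemma avgOn_eq_setAverage (f : (Fin n → ℝ) → ℝ) (Q : Set (Fin n → ℝ)) :
    avgOn f Q = ⨍ x in Q, f x :=
  (setAverage_eq volume f Q).symm

lemma oscOn_eq_setAverage (f : (Fin n → ℝ) → ℝ) (Q : Set (Fin n → ℝ)) :
    oscOn f Q = ⨍ x in Q, |f x - avgOn f Q| :=
  (setAverage_eq volume _ Q).symm

lemma avgOn_congr_set (h : Q =ᵐ[volume] R) : avgOn f Q = avgOn f R := by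
  simp only [avgOn_eq_setAverage, setAverage_congr h]

lemma oscOn_congr_set (h : Q =ᵐ[volume] R) : oscOn f Q = oscOn f R := by
  simp only [oscOn_eq_setAverage, avgOn_congr_set h, setAverage_congr h]

lemma avgOn_mul_volume (hQ : volume Q ≠ ⊤) :
    avgOn f Q * volume.real Q = ∫ x in Q, f x := by
  rw [avgOn_eq_setAverage, mul_comm, ← smul_eq_mul, measure_smul_setAverage f hQ]

lemma oscOn_mul_volume (hQ : volume Q ≠ ⊤) :
    oscOn f Q * volume.real Q = ∫ x in Q, |f x - avgOn f Q| := by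
  rw [oscOn_eq_setAverage, mul_comm, ← smul_eq_mul, measure_smul_setAverage _ hQ]

lemma avgOn_nonneg (hQ : MeasurableSet Q) (hpos : ∀ x ∈ Q, 0 ≤ f x) : 0 ≤ avgOn f Q :=
  mul_nonneg (by positivity) (setIntegral_nonneg hQ hpos)

lemma oscOn_nonneg (f : (Fin n → ℝ) → ℝ) (Q : Set (Fin n → ℝ)) : 0 ≤ oscOn f Q :=
  mul_nonneg (by positivity) (integral_nonneg fun _ ↦ abs_nonneg _)

lemma setIntegral_max_sub_le_oscOn (hQ : volume Q ≠ ⊤) (hf : IntegrableOn f Q) {A : ℝ}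
    (hA : avgOn f Q ≤ A) :
    ∫ x in Q, max (f x - A) 0 ≤ 2⁻¹ * oscOn f Q * volume.real Q := by
  -- The oscillation splits evenly between the excess over and the deficit under the average.
  set c := avgOn f Q with hc
  have hdev : IntegrableOn (fun x ↦ f x - c) Q := hf.sub (integrableOn_const hQ)
  have hdev_zero : ∫ x in Q, (f x - c) = 0 := by
    rw [integral_sub hf (integrableOn_const hQ), ← avgOn_mul_volume hQ, setIntegral_const,
      smul_eq_mul, hc]
    ring
  calc ∫ x in Q, max (f x - A) 0
      ≤ ∫ x in Q, 2⁻¹ * (|f x - c| + (f x - c)) := by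
        refine integral_mono (integrableOn_max_sub_const hf hQ A)
          ((hdev.abs.add hdev).const_mul _) fun x ↦ ?_
        exact max_le (by linarith [le_abs_self (f x - c)]) (by linarith [neg_abs_le (f x - c)])
    _ = 2⁻¹ * oscOn f Q * volume.real Q := by
        rw [integral_const_mul, integral_add hdev.abs hdev, hdev_zero, add_zero, mul_assoc,
          oscOn_mul_volume hQ]

lemma oscOn_le_two_mul_avgOn (hQ : MeasurableSet Q) (hQ0 : volume.real Q ≠ 0)
    (hf : IntegrableOn f Q) (hpos : ∀ x ∈ Q, 0 ≤ f x) : oscOn f Q ≤ 2 * avgOn f Q := by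
  have hQ_top : volume Q ≠ ⊤ := fun h ↦ hQ0 (by simp [measureReal_def, h])
  set c := avgOn f Q
  have hc0 : 0 ≤ c := avgOn_nonneg hQ hpos
  have hconst : IntegrableOn (fun _ ↦ c) Q := integrableOn_const hQ_top
  refine le_of_mul_le_mul_right ?_ (measureReal_nonneg.lt_of_ne' hQ0)
  calc oscOn f Q * volume.real Q
      = ∫ x in Q, |f x - c| := oscOn_mul_volume hQ_top
    _ ≤ ∫ x in Q, (f x + c) :=
        setIntegral_mono_on (hf.sub hconst).abs (hf.add hconst) hQ fun x hx ↦
          abs_le.2 ⟨by linarith [hpos x hx], by linarith⟩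
    _ = 2 * c * volume.real Q := by
        rw [integral_add hf hconst, ← avgOn_mul_volume hQ_top, setIntegral_const, smul_eq_mul]
        ring

end MeanOscillation

section Rearrangement

lemma volume_Q0 (n : ℕ) : volume (Q0 n) = 1 := by
  simp [Q0, Real.volume_Icc_pi]

lemma volume_Q0_ne_top (n : ℕ) : volume (Q0 n) ≠ ⊤ := by
  simp [volume_Q0]

lemma measurableSet_Q0 (n : ℕ) : MeasurableSet (Q0 n) := measurableSet_Icc

lemma setIntegral_max_sub_eq_of_antitoneOn {g : ℝ → ℝ} {b t : ℝ} (hg : AntitoneOn g (Ioc 0 b))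
    (hgi : IntegrableOn g (Ioc 0 b)) (ht : t ∈ Ioc 0 b) :
    ∫ u in Ioc 0 b, max (g u - g t) 0 = t * (hardyAvg g t - g t) := by
  have hgt : IntegrableOn g (Ioc 0 t) := hgi.mono_set (Ioc_subset_Ioc_right ht.2)
  have hvanish : ∀ u ∈ Ioc 0 b \ Ioc 0 t, max (g u - g t) 0 = 0 := fun u hu ↦ by
    have htu : t ≤ u := (not_le.1 fun h ↦ hu.2 ⟨hu.1.1, h⟩).le
    exact max_eq_right (sub_nonpos.2 (hg ht hu.1 htu))
  have hpositive : EqOn (fun u ↦ max (g u - g t) 0) (fun u ↦ g u - g t) (Ioc 0 t) := fun u hu ↦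
    max_eq_left (sub_nonneg.2 (hg ⟨hu.1, hu.2.trans ht.2⟩ ht hu.2))
  rw [setIntegral_eq_of_subset_of_forall_sdiff_eq_zero measurableSet_Ioc
      (Ioc_subset_Ioc_right ht.2) hvanish,
    setIntegral_congr_fun measurableSet_Ioc hpositive,
    integral_sub hgt (integrableOn_const (by simp)), setIntegral_const, smul_eq_mul,
    Real.volume_real_Ioc_of_le ht.1.le, hardyAvg, mul_sub, mul_inv_cancel_left₀ ht.1.ne', sub_zero]

lemma hardyAvg_le_add_setIntegral_max_sub {g : ℝ → ℝ} {b s : ℝ} (hg : IntegrableOn g (Ioc 0 b))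
    (hs : s ∈ Ioc 0 b) (c : ℝ) :
    hardyAvg g s ≤ c + s⁻¹ * ∫ u in Ioc 0 b, max (g u - c) 0 := by
  have hle := setIntegral_le_mul_measureReal_add (Ioc_subset_Ioc_right hs.2) (by simp) hg c
  rw [Real.volume_real_Ioc_of_le hs.1.le, sub_zero] at hle
  rw [hardyAvg, inv_mul_le_iff₀ hs.1, mul_add, mul_inv_cancel_left₀ hs.1.ne']
  linarith

namespace IsRearrangement

variable {n : ℕ} {f f' : (Fin n → ℝ) → ℝ} {g : ℝ → ℝ}

lemma congr (h : IsRearrangement f g) (hff' : EqOn f f' (Q0 n)) : IsRearrangement f' g := by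
  refine ⟨h.1, h.2.1, fun c ↦ (h.2.2 c).trans (congrArg volume ?_)⟩
  ext x
  exact and_congr_right fun hx ↦ by rw [hff' hx]

lemma identDistrib (h : IsRearrangement f g) (hf : AEMeasurable f (volume.restrict (Q0 n))) :
    IdentDistrib g f (volume.restrict (Ioc 0 1)) (volume.restrict (Q0 n)) := by
  have hg : AEMeasurable g (volume.restrict (Ioc 0 1)) :=
    aemeasurable_restrict_of_antitoneOn measurableSet_Ioc h.1
  refine ⟨hg, hf, ?_⟩
  have : IsProbabilityMeasure (volume.restrict (Q0 n)) := ⟨by simp [volume_Q0]⟩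
  have : IsProbabilityMeasure (volume.restrict (Ioc (0 : ℝ) 1)) := ⟨by simp⟩
  have := Measure.isProbabilityMeasure_map hg
  have := Measure.isProbabilityMeasure_map hf
  refine Measure.ext_of_Iic _ _ fun c ↦ ?_
  rw [← compl_Ioi, prob_compl_eq_one_sub measurableSet_Ioi, prob_compl_eq_one_sub measurableSet_Ioi,
    Measure.map_apply_of_aemeasurable hg measurableSet_Ioi,
    Measure.map_apply_of_aemeasurable hf measurableSet_Ioi,
    Measure.restrict_apply' measurableSet_Ioc, Measure.restrict_apply' (measurableSet_Q0 n),
    inter_comm, inter_comm _ (Q0 n)]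
  exact congrArg (1 - ·) (h.2.2 c)

lemma integrableOn (h : IsRearrangement f g) (hf : IntegrableOn f (Q0 n)) :
    IntegrableOn g (Ioc 0 1) :=
  (h.identDistrib hf.aemeasurable).integrable_iff.2 hf

lemma setIntegral_max_sub_eq (h : IsRearrangement f g)
    (hf : AEMeasurable f (volume.restrict (Q0 n))) (c : ℝ) :
    ∫ u in Ioc 0 1, max (g u - c) 0 = ∫ x in Q0 n, max (f x - c) 0 :=
  ((h.identDistrib hf).comp (u := fun y ↦ max (y - c) 0) (by fun_prop)).integral_eq

lemma setIntegral_le_hardyAvg_mul (h : IsRearrangement f g) (hf : IntegrableOn f (Q0 n)) {t : ℝ}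
    (ht : t ∈ Ioc 0 1) {U : Set (Fin n → ℝ)} (hU : U ⊆ Q0 n) (htU : t ≤ volume.real U) :
    ∫ x in U, f x ≤ hardyAvg g t * volume.real U := by
  -- Both sides are compared with the level `g t`.
  have hexcess : ∫ x in Q0 n, max (f x - g t) 0 = t * (hardyAvg g t - g t) := by
    rw [← h.setIntegral_max_sub_eq hf.aemeasurable,
      setIntegral_max_sub_eq_of_antitoneOn h.1 (h.integrableOn hf) ht]
  have hlevel : 0 ≤ hardyAvg g t - g t :=
    nonneg_of_mul_nonneg_right (hexcess ▸ integral_nonneg fun _ ↦ le_max_right _ _) ht.1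
  calc ∫ x in U, f x
      ≤ g t * volume.real U + t * (hardyAvg g t - g t) :=
        hexcess ▸ setIntegral_le_mul_measureReal_add hU (volume_Q0_ne_top n) hf (g t)
    _ ≤ g t * volume.real U + volume.real U * (hardyAvg g t - g t) := by gcongr
    _ = hardyAvg g t * volume.real U := by ring

end IsRearrangement

end Rearrangement

section DyadicBox

variable {ι : Type*}

/-- The half-open dyadic box `∏ᵢ (mᵢ 2⁻ᵏ, (mᵢ + 1) 2⁻ᵏ]`. Half-open boxes of one generation
partition the space, and each agrees up to a null set with the closed dyadic cube on the same
vertices. -/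
abbrev dyadicBox (k : ℕ) (m : ι → ℤ) : Box ι := unitPartition.box (2 ^ k) m

/-- The family of all half-open dyadic boxes of generation `k ≥ 0`. -/
def dyadicBoxes (ι : Type*) : Set (Box ι) :=
  range fun p : ℕ × (ι → ℤ) ↦ dyadicBox p.1 p.2

lemma mem_dyadicBox_index (k : ℕ) (x : ι → ℝ) :
    x ∈ dyadicBox k (unitPartition.index (2 ^ k) x) :=
  unitPartition.mem_box_iff_index.2 rfl

lemma dyadicBox_le_of_mem {j k : ℕ} (hjk : j ≤ k) {l m : ι → ℤ} {x : ι → ℝ}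
    (hl : x ∈ dyadicBox j l) (hm : x ∈ dyadicBox k m) : dyadicBox k m ≤ dyadicBox j l := by
  obtain ⟨d, rfl⟩ := Nat.exists_eq_add_of_le hjk
  rw [unitPartition.mem_box_iff'] at hl hm
  push_cast [pow_add] at hl hm
  have hlower (i : ι) : l i * 2 ^ d ≤ m i := by
    have : (l i * 2 ^ d : ℝ) < m i + 1 := by
      nlinarith [(hl i).1, (hm i).2, show (0 : ℝ) < 2 ^ d by positivity]
    exact Int.lt_add_one_iff.1 (by exact_mod_cast this)
  have hupper (i : ι) : m i + 1 ≤ (l i + 1) * 2 ^ d := by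
    have : (m i : ℝ) < (l i + 1) * 2 ^ d := by
      nlinarith [(hl i).2, (hm i).1, show (0 : ℝ) < 2 ^ d by positivity]
    exact Int.add_one_le_iff.2 (by exact_mod_cast this)
  refine Box.le_iff_bounds.2 ⟨fun i ↦ ?_, fun i ↦ ?_⟩
  · have : (l i * 2 ^ d : ℝ) ≤ m i := by exact_mod_cast hlower i
    simp only [unitPartition.box_lower]
    push_cast [pow_add]
    rw [div_le_div_iff₀ (by positivity) (by positivity)]
    nlinarith [show (0 : ℝ) < 2 ^ j by positivity]
  · have : (m i + 1 : ℝ) ≤ (l i + 1) * 2 ^ d := by exact_mod_cast hupper i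
    simp only [unitPartition.box_upper]
    push_cast [pow_add]
    rw [div_le_div_iff₀ (by positivity) (by positivity)]
    nlinarith [show (0 : ℝ) < 2 ^ j by positivity]

lemma pairwise_disjoint_maximal_dyadicBoxes {𝓑 : Set (Box ι)} (h𝓑 : 𝓑 ⊆ dyadicBoxes ι) :
    Pairwise (Function.onFun Disjoint
      fun P : {P : Box ι // Maximal (· ∈ 𝓑) P} ↦ (P : Set (ι → ℝ))) := by
  rintro ⟨P, hP⟩ ⟨P', hP'⟩ hne
  obtain ⟨⟨k, m⟩, rfl⟩ := h𝓑 hP.prop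
  obtain ⟨⟨k', m'⟩, rfl⟩ := h𝓑 hP'.prop
  refine Set.disjoint_left.2 fun x hx hx' ↦ hne (Subtype.ext ?_)
  rcases le_total k k' with hle | hle
  · exact (hP'.eq_of_le hP.prop (dyadicBox_le_of_mem hle hx hx')).symm
  · exact hP.eq_of_le hP'.prop (dyadicBox_le_of_mem hle hx' hx)

lemma exists_le_maximal_of_subset_dyadicBoxes {𝓑 : Set (Box ι)} (h𝓑 : 𝓑 ⊆ dyadicBoxes ι)
    {B : Box ι} (hB : B ∈ 𝓑) : ∃ P, B ≤ P ∧ Maximal (· ∈ 𝓑) P := by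
  classical
  have hgen : ∃ k m, dyadicBox k m ∈ 𝓑 ∧ B ≤ dyadicBox k m := by
    obtain ⟨⟨k, m⟩, rfl⟩ := h𝓑 hB
    exact ⟨k, m, hB, le_rfl⟩
  obtain ⟨m, hm, hBm⟩ := Nat.find_spec hgen
  refine ⟨_, hBm, hm, fun C hC hle ↦ ?_⟩
  obtain ⟨⟨j, l⟩, rfl⟩ := h𝓑 hC
  obtain ⟨x, hx⟩ := (dyadicBox (Nat.find hgen) m).exists_mem
  exact dyadicBox_le_of_mem (Nat.find_min' hgen ⟨l, hC, hBm.trans hle⟩) hx (hle hx)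

lemma countable_dyadicBoxes (ι : Type*) [Finite ι] : (dyadicBoxes ι).Countable :=
  countable_range _

variable [Fintype ι]

lemma volume_real_dyadicBox (k : ℕ) (m : ι → ℤ) :
    volume.real (dyadicBox k m : Set (ι → ℝ)) = ((2 ^ k)⁻¹ : ℝ) ^ Fintype.card ι := by
  simp [measureReal_def]

lemma Icc_dyadicBox_eq_closedBall (k : ℕ) (m : ι → ℤ) :
    Box.Icc (dyadicBox k m) =
      Metric.closedBall (fun i ↦ (m i + 2⁻¹ : ℝ) / 2 ^ k) (2⁻¹ * 2⁻¹ ^ k : ℝ) := by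
  rw [closedBall_pi _ (by positivity), Box.Icc_eq_pi]
  refine congrArg (Set.pi univ) (funext fun i ↦ ?_)
  rw [Real.closedBall_eq_Icc]
  simp only [unitPartition.box_lower, unitPartition.box_upper]
  push_cast
  congr 1 <;> (rw [inv_pow]; field_simp; ring)

lemma ae_tendsto_setAverage_dyadicBox {E : Type*} [NormedAddCommGroup E] [NormedSpace ℝ E]
    [CompleteSpace E] {f : (ι → ℝ) → E} (hf : LocallyIntegrable f) :
    ∀ᵐ x, Tendsto
      (fun k ↦ ⨍ y in (dyadicBox k (unitPartition.index (2 ^ k) x) : Set (ι → ℝ)), f y)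
      atTop (𝓝 (f x)) := by
  have hradius : Tendsto (fun k : ℕ ↦ (2⁻¹ * 2⁻¹ ^ k : ℝ)) atTop (𝓝[>] 0) := by
    refine tendsto_nhdsWithin_iff.2 ⟨?_, .of_forall fun k ↦ mem_Ioi.2 (by positivity)⟩
    simpa using (tendsto_pow_atTop_nhds_zero_of_lt_one (r := (2⁻¹ : ℝ)) (by norm_num)
      (by norm_num)).const_mul 2⁻¹
  filter_upwards [IsUnifLocDoublingMeasure.ae_tendsto_average volume hf 1] with x hx
  have hlim := hx (fun (k : ℕ) i ↦ (unitPartition.index (2 ^ k) x i + 2⁻¹) / 2 ^ k) _ hradius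
    (.of_forall fun k ↦ by
      rw [one_mul, ← Icc_dyadicBox_eq_closedBall]
      exact Box.coe_subset_Icc (mem_dyadicBox_index k x))
  refine hlim.congr fun k ↦ ?_
  rw [← Icc_dyadicBox_eq_closedBall, setAverage_congr (Box.coe_ae_eq_Icc _)]

end DyadicBox

section UnitCube

variable {n : ℕ} {f : (Fin n → ℝ) → ℝ} {k : ℕ} {m : Fin n → ℤ}

/-- The half-open unit cube `(0,1]ⁿ`, which agrees up to a null set with `Q0 n`. -/
abbrev unitBox (n : ℕ) : Box (Fin n) := dyadicBox 0 0

lemma Icc_unitBox (n : ℕ) : Box.Icc (unitBox n) = Q0 n := by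
  simp [Box.Icc_def, Q0, Pi.zero_def, Pi.one_def]

lemma unitBox_ae_eq_Q0 (n : ℕ) : (unitBox n : Set (Fin n → ℝ)) =ᵐ[volume] Q0 n :=
  Icc_unitBox n ▸ Box.coe_ae_eq_Icc _

lemma coe_subset_Q0 {B : Box (Fin n)} (hB : B ≤ unitBox n) : (B : Set (Fin n → ℝ)) ⊆ Q0 n :=
  Icc_unitBox n ▸ (Box.coe_subset_coe.2 hB).trans Box.coe_subset_Icc

lemma dyadicBox_le_unitBox_iff : dyadicBox k m ≤ unitBox n ↔ ∀ i, 0 ≤ m i ∧ m i < 2 ^ k := by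
  have hk : (0 : ℝ) < 2 ^ k := by positivity
  rw [Box.le_iff_bounds, Pi.le_def, Pi.le_def, ← forall_and]
  refine forall_congr' fun i ↦ and_congr ?_ ?_
  · simp [le_div_iff₀ hk]
  · simp only [unitPartition.box_upper]
    push_cast
    rw [div_le_div_iff₀ hk (by positivity), ← Int.add_one_le_iff]
    simp only [mul_one, Pi.zero_apply, Int.cast_zero, zero_add, one_mul]
    exact_mod_cast Iff.rfl

lemma isDyadicSide_iff {Q : Set (Fin n → ℝ)} :
    IsDyadicSide n k Q ↔
      ∃ m : Fin n → ℤ, dyadicBox k m ≤ unitBox n ∧ Q = Box.Icc (dyadicBox k m) := by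
  simp only [dyadicBox_le_unitBox_iff]
  constructor
  · rintro ⟨m, hm, rfl⟩
    exact ⟨fun i ↦ m i, fun i ↦ ⟨Int.natCast_nonneg _, by beta_reduce; exact_mod_cast hm i⟩,
      by simp [Box.Icc_def]⟩
  · rintro ⟨m, hm, rfl⟩
    lift m to Fin n → ℕ using fun i ↦ (hm i).1
    exact ⟨m, fun i ↦ by beta_reduce at hm; exact_mod_cast (hm i).2, by simp [Box.Icc_def]⟩

lemma oscOn_dyadicBox_le_two_mul_avgOn (hf : IntegrableOn f (Q0 n))
    (hpos : ∀ x ∈ Q0 n, 0 ≤ f x) (hm : dyadicBox k m ≤ unitBox n) :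
    oscOn f (dyadicBox k m) ≤ 2 * avgOn f (dyadicBox k m) :=
  oscOn_le_two_mul_avgOn (Box.measurableSet_coe _) (by rw [volume_real_dyadicBox]; positivity)
    (hf.mono_set (coe_subset_Q0 hm)) fun x hx ↦ hpos x (coe_subset_Q0 hm hx)

lemma vGR_nonneg (f : (Fin n → ℝ) → ℝ) (σ : ℝ) : 0 ≤ vGR f σ := by
  refine Real.sSup_nonneg ?_
  rintro _ ⟨_, Q, -, -, hQ, rfl⟩
  exact div_nonneg (oscOn_nonneg f Q) hQ.le

lemma oscOn_dyadicBox_le_vGR_mul_avgOn (hf : IntegrableOn f (Q0 n))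
    (hpos : ∀ x ∈ Q0 n, 0 ≤ f x) {σ : ℝ} (hσ : ((2 : ℝ) ^ k)⁻¹ ≤ σ)
    (hm : dyadicBox k m ≤ unitBox n) :
    oscOn f (dyadicBox k m) ≤ vGR f σ * avgOn f (dyadicBox k m) := by
  have havg : 0 ≤ avgOn f (dyadicBox k m) :=
    avgOn_nonneg (Box.measurableSet_coe _) fun x hx ↦ hpos x (coe_subset_Q0 hm hx)
  rcases havg.eq_or_lt with hzero | hlt
  · have hosc := oscOn_dyadicBox_le_two_mul_avgOn hf hpos hm
    rwa [← hzero, mul_zero] at hosc ⊢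
  rw [← div_le_iff₀ hlt]
  refine le_csSup ⟨2, ?_⟩ ⟨k, _, isDyadicSide_iff.2 ⟨m, hm, rfl⟩, hσ, ?_, ?_⟩
  · rintro _ ⟨j, Q, hQ, -, hpos_avg, rfl⟩
    obtain ⟨l, hl, rfl⟩ := isDyadicSide_iff.1 hQ
    rw [div_le_iff₀ hpos_avg, ← oscOn_congr_set (Box.coe_ae_eq_Icc _),
      ← avgOn_congr_set (Box.coe_ae_eq_Icc _)]
    exact oscOn_dyadicBox_le_two_mul_avgOn hf hpos hl
  · rwa [← avgOn_congr_set (Box.coe_ae_eq_Icc _)]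
  · rw [oscOn_congr_set (Box.coe_ae_eq_Icc _), avgOn_congr_set (Box.coe_ae_eq_Icc _)]

lemma setIntegral_max_sub_le_vGR_mul_volume (hf : IntegrableOn f (Q0 n))
    (hpos : ∀ x ∈ Q0 n, 0 ≤ f x) {σ : ℝ} (hσ : ((2 : ℝ) ^ k)⁻¹ ≤ σ)
    (hm : dyadicBox k m ≤ unitBox n) {A : ℝ} (hA : avgOn f (dyadicBox k m) ≤ A) :
    ∫ x in dyadicBox k m, max (f x - A) 0 ≤
      2⁻¹ * (vGR f σ * A) * volume.real (dyadicBox k m : Set (Fin n → ℝ)) := by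
  have hsub := coe_subset_Q0 hm
  refine (setIntegral_max_sub_le_oscOn (measure_ne_top_of_subset hsub (volume_Q0_ne_top n))
    (hf.mono_set hsub) hA).trans ?_
  gcongr
  exact (oscOn_dyadicBox_le_vGR_mul_avgOn hf hpos hσ hm).trans
    (mul_le_mul_of_nonneg_left hA (vGR_nonneg f σ))

end UnitCube

section CalderonZygmund

variable {n : ℕ} {f : (Fin n → ℝ) → ℝ} {A t : ℝ}

/-- The dyadic boxes in the unit cube having a child on which the average of `f` exceeds `A`.
The stopping boxes of the argument are the maximal members of this family: choosing parents
instead of the children themselves keeps the average of `f` over a stopping box at most `A`. -/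
def hotParents (f : (Fin n → ℝ) → ℝ) (A : ℝ) : Set (Box (Fin n)) :=
  {P | ∃ k m l, P = dyadicBox k m ∧ P ≤ unitBox n ∧ dyadicBox (k + 1) l ≤ P ∧
    A < avgOn f (dyadicBox (k + 1) l)}

lemma hotParents_subset_dyadicBoxes (f : (Fin n → ℝ) → ℝ) (A : ℝ) :
    hotParents f A ⊆ dyadicBoxes (Fin n) := by
  rintro _ ⟨k, m, -, rfl, -⟩
  exact ⟨(k, m), rfl⟩

lemma dyadicBox_index_mem_hotParents {k : ℕ} {l : Fin n → ℤ} {x : Fin n → ℝ}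
    (hx : x ∈ unitBox n) (hxl : x ∈ dyadicBox (k + 1) l)
    (hl : A < avgOn f (dyadicBox (k + 1) l)) :
    dyadicBox k (unitPartition.index (2 ^ k) x) ∈ hotParents f A :=
  have hxk := mem_dyadicBox_index k x
  ⟨k, _, l, rfl, dyadicBox_le_of_mem k.zero_le hx hxk, dyadicBox_le_of_mem k.le_succ hxk hxl, hl⟩

lemma avgOn_le_of_maximal_hotParents (hn : n ≠ 0) (hunit : avgOn f (unitBox n) ≤ A)
    {P : Box (Fin n)} (hP : Maximal (· ∈ hotParents f A) P) : avgOn f P ≤ A := by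
  obtain ⟨k, m, -, rfl, hle, -⟩ := hP.prop
  obtain ⟨x, hx⟩ := (dyadicBox k m).exists_mem
  cases k with
  | zero => rwa [hle.antisymm (dyadicBox_le_of_mem le_rfl hx (hle hx))]
  | succ j =>
    by_contra! hlt
    have hparent := hP.eq_of_le (dyadicBox_index_mem_hotParents (hle hx) hx hlt)
      (dyadicBox_le_of_mem j.le_succ (mem_dyadicBox_index j x) hx)
    have hvolume := congrArg (fun B : Box (Fin n) ↦ volume.real (B : Set (Fin n → ℝ))) hparent
    simp only [volume_real_dyadicBox, Fintype.card_fin] at hvolume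
    have hside := (pow_left_inj₀ (by positivity) (by positivity) hn).1 hvolume
    simp [pow_succ] at hside

lemma ae_le_of_notMem_maximal_hotParents (hf : IntegrableOn f (Q0 n))
    (hunit : avgOn f (unitBox n) ≤ A) :
    ∀ᵐ x, x ∈ Q0 n \ ⋃ P : {P // Maximal (· ∈ hotParents f A) P}, (P.1 : Set (Fin n → ℝ)) →
      f x ≤ A := by
  have hloc : LocallyIntegrable ((unitBox n : Set (Fin n → ℝ)).indicator f) :=
    ((integrable_indicator_iff (Box.measurableSet_coe _)).2
      (hf.mono_set (coe_subset_Q0 le_rfl))).locallyIntegrable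
  filter_upwards [ae_tendsto_setAverage_dyadicBox hloc, (unitBox_ae_eq_Q0 n).mem_iff]
    with x hlim hmem ⟨hxQ, hxP⟩
  have hx : x ∈ unitBox n := hmem.2 hxQ
  rw [indicator_of_mem hx] at hlim
  refine le_of_tendsto' hlim fun k ↦ ?_
  have hxk := mem_dyadicBox_index k x
  have hle := dyadicBox_le_of_mem k.zero_le hx hxk
  rw [setAverage_congr_fun (Box.measurableSet_coe _)
    (.of_forall fun y hy ↦ indicator_of_mem (hle hy) f), ← avgOn_eq_setAverage]
  cases k with
  | zero => rwa [hle.antisymm (dyadicBox_le_of_mem le_rfl hxk hx)]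
  | succ j =>
    by_contra! hlt
    obtain ⟨P, hjP, hP⟩ := exists_le_maximal_of_subset_dyadicBoxes
      (hotParents_subset_dyadicBoxes f A) (dyadicBox_index_mem_hotParents hx hxk hlt)
    exact hxP (mem_iUnion.2 ⟨⟨P, hP⟩, hjP (mem_dyadicBox_index j x)⟩)

lemma inv_two_pow_le_min_of_volume_le (hn : n ≠ 0) {k : ℕ} {l : Fin n → ℤ}
    (hl : volume.real (dyadicBox (k + 1) l : Set (Fin n → ℝ)) ≤ t) :
    ((2 : ℝ) ^ k)⁻¹ ≤ min (2 * t ^ (n : ℝ)⁻¹) 1 := by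
  refine le_min ?_ (inv_le_one_of_one_le₀ (one_le_pow₀ one_le_two))
  rw [volume_real_dyadicBox, Fintype.card_fin] at hl
  have hroot := Real.rpow_le_rpow (by positivity) hl (inv_nonneg.2 n.cast_nonneg)
  rw [Real.pow_rpow_inv_natCast (by positivity) hn, pow_succ, mul_inv] at hroot
  linarith

lemma setIntegral_max_sub_le_of_volume_child_le (hn : n ≠ 0) (hf : IntegrableOn f (Q0 n))
    (hpos : ∀ x ∈ Q0 n, 0 ≤ f x) {k : ℕ} {l m : Fin n → ℤ} (hm : dyadicBox k m ≤ unitBox n)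
    (hA : avgOn f (dyadicBox k m) ≤ A)
    (hl : volume.real (dyadicBox (k + 1) l : Set (Fin n → ℝ)) ≤ t) :
    ∫ x in dyadicBox k m, max (f x - A) 0 ≤
      2 ^ (n - 1) * vGR f (min (2 * t ^ (n : ℝ)⁻¹) 1) * A *
        volume.real (dyadicBox (k + 1) l : Set (Fin n → ℝ)) := by
  have hvolume : volume.real (dyadicBox k m : Set (Fin n → ℝ)) =
      2 ^ n * volume.real (dyadicBox (k + 1) l : Set (Fin n → ℝ)) := by
    simp only [volume_real_dyadicBox, Fintype.card_fin, ← mul_pow]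
    congr 1
    field_simp
    ring
  have hpow : (2 : ℝ) ^ n = 2 * 2 ^ (n - 1) := (mul_pow_sub_one hn 2).symm
  refine (setIntegral_max_sub_le_vGR_mul_volume hf hpos
    (inv_two_pow_le_min_of_volume_le hn hl) hm hA).trans_eq ?_
  rw [hvolume, hpow]
  ring

lemma avgOn_unitBox_le_of_setIntegral_le (ht : t ≤ 1)
    (hlarge : ∀ U ⊆ Q0 n, t ≤ volume.real U → ∫ x in U, f x ≤ A * volume.real U) :
    avgOn f (unitBox n) ≤ A := by
  have hvolume : volume.real (Q0 n) = 1 := by simp [measureReal_def, volume_Q0]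
  rw [avgOn_congr_set (unitBox_ae_eq_Q0 n), avgOn, volume_Q0]
  simpa [hvolume] using hlarge _ subset_rfl (hvolume ▸ ht)

lemma sum_volume_le_of_lt_avgOn (hf : IntegrableOn f (Q0 n)) (ht : 0 ≤ t)
    (hlarge : ∀ U ⊆ Q0 n, t ≤ volume.real U → ∫ x in U, f x ≤ A * volume.real U)
    {ι : Type*} {B : ι → Box (Fin n)} (hB : ∀ i, B i ≤ unitBox n)
    (hdisj : Pairwise (Function.onFun Disjoint fun i ↦ (B i : Set (Fin n → ℝ))))
    (hlt : ∀ i, A < avgOn f (B i)) (S : Finset ι) :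
    ∑ i ∈ S, volume.real (B i : Set (Fin n → ℝ)) ≤ t := by
  refine sum_measureReal_le_of_lt_setIntegral hlarge hf (volume_Q0_ne_top n) ht S
    (fun i _ ↦ (B i).measurableSet_coe) (fun i _ ↦ coe_subset_Q0 (hB i))
    (hdisj.set_pairwise _) fun i _ ↦ ?_
  have hvolume : 0 < volume.real (B i : Set (Fin n → ℝ)) := by
    rw [measureReal_def, Box.volume_apply']
    exact Finset.prod_pos fun j _ ↦ sub_pos.2 ((B i).lower_lt_upper j)
  rw [← avgOn_mul_volume ((B i).measure_coe_lt_top volume).ne]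
  exact mul_lt_mul_of_pos_right (hlt i) hvolume

lemma setIntegral_Q0_max_sub_le_vGR_mul (hn : n ≠ 0) (hf : IntegrableOn f (Q0 n))
    (hpos : ∀ x ∈ Q0 n, 0 ≤ f x) (ht : t ∈ Icc 0 1)
    (hlarge : ∀ U ⊆ Q0 n, t ≤ volume.real U → ∫ x in U, f x ≤ A * volume.real U) :
    ∫ x in Q0 n, max (f x - A) 0 ≤
      2 ^ (n - 1) * vGR f (min (2 * t ^ (n : ℝ)⁻¹) 1) * A * t := by
  have hunit : avgOn f (unitBox n) ≤ A := avgOn_unitBox_le_of_setIntegral_le ht.2 hlarge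
  have hA : 0 ≤ A := (avgOn_nonneg (Box.measurableSet_coe _)
    fun x hx ↦ hpos x (coe_subset_Q0 le_rfl hx)).trans hunit
  have hv := vGR_nonneg f (min (2 * t ^ (n : ℝ)⁻¹) 1)
  have hdyadic := hotParents_subset_dyadicBoxes f A
  have : Countable {P // Maximal (· ∈ hotParents f A) P} :=
    ((countable_dyadicBoxes (Fin n)).mono fun _ hP ↦ hdyadic (Maximal.prop hP)).to_subtype
  choose k m l hkm hle hchild hhot using
    fun P : {P // Maximal (· ∈ hotParents f A) P} ↦ P.2.prop
  have hdisj := pairwise_disjoint_maximal_dyadicBoxes hdyadic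
  have hsum := sum_volume_le_of_lt_avgOn hf ht.1 hlarge (fun P ↦ (hchild P).trans (hle P))
    (fun P P' hne ↦ (hdisj hne).mono (hchild P) (hchild P')) hhot
  refine setIntegral_le_of_forall_sum_le (measurableSet_Q0 n)
    (integrableOn_max_sub_const hf (volume_Q0_ne_top n) A) (fun _ ↦ Box.measurableSet_coe _)
    (fun P ↦ coe_subset_Q0 (hle P)) hdisj ?_ fun S ↦ ?_
  · filter_upwards [ae_le_of_notMem_maximal_hotParents hf hunit] with x hx hxP
    exact max_eq_right (sub_nonpos.2 (hx hxP))
  · have hterm (P) : ∫ x in (P.1 : Set (Fin n → ℝ)), max (f x - A) 0 ≤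
        2 ^ (n - 1) * vGR f (min (2 * t ^ (n : ℝ)⁻¹) 1) * A *
          volume.real (dyadicBox (k P + 1) (l P) : Set (Fin n → ℝ)) := by
      have havg := avgOn_le_of_maximal_hotParents hn hunit P.2
      rw [hkm P] at havg ⊢
      exact setIntegral_max_sub_le_of_volume_child_le hn hf hpos (hkm P ▸ hle P) havg
        (by simpa using hsum {P})
    refine (Finset.sum_le_sum fun P _ ↦ hterm P).trans ?_
    rw [← Finset.mul_sum]
    exact mul_le_mul_of_nonneg_left (hsum S) (by positivity)

end CalderonZygmund

/-- For integrable `f : [0,1]ⁿ → [0,∞)`, every `t ∈ (0,1]` and every `γ > 1` (so that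
`t/γ ∈ (0,1]`), `f**(t/γ) ≤ (1 + 2ⁿ⁻¹ γ v(f;σ_t)) f**(t)` where `σ_t = min(2 t^{1/n}, 1)`. -/
theorem hardy_average_step (n : ℕ) (hn : 1 ≤ n)
    (f : (Fin n → ℝ) → ℝ) (hf : IntegrableOn f (Q0 n)) (hpos : ∀ x ∈ Q0 n, 0 ≤ f x)
    (fstar : ℝ → ℝ) (hfs : IsRearrangement (fun x => |f x|) fstar) :
    ∀ t ∈ Set.Ioc (0:ℝ) 1, ∀ γ : ℝ, 1 < γ →
      hardyAvg fstar (t / γ) ≤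
        (1 + 2 ^ (n - 1) * γ * vGR f (min (2 * t ^ ((n : ℝ))⁻¹) 1)) * hardyAvg fstar t := by
  intro t ht γ hγ
  set A := hardyAvg fstar t
  set v := vGR f (min (2 * t ^ (n : ℝ)⁻¹) 1)
  have hrearr : IsRearrangement f fstar := hfs.congr fun x hx ↦ abs_of_nonneg (hpos x hx)
  have ht0 : 0 < t := ht.1
  have hγ0 : 0 < γ := zero_lt_one.trans hγ
  have hs : t / γ ∈ Ioc 0 1 := ⟨div_pos ht0 hγ0, (div_le_self ht0.le hγ.le).trans ht.2⟩
  have hexcess : ∫ u in Ioc 0 1, max (fstar u - A) 0 ≤ 2 ^ (n - 1) * v * A * t := by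
    rw [hrearr.setIntegral_max_sub_eq hf.aemeasurable]
    exact setIntegral_Q0_max_sub_le_vGR_mul (Nat.one_le_iff_ne_zero.1 hn) hf hpos ⟨ht0.le, ht.2⟩
      fun U hU htU ↦ hrearr.setIntegral_le_hardyAvg_mul hf ht hU htU
  calc hardyAvg fstar (t / γ)
      ≤ A + (t / γ)⁻¹ * ∫ u in Ioc 0 1, max (fstar u - A) 0 :=
        hardyAvg_le_add_setIntegral_max_sub (hrearr.integrableOn hf) hs A
    _ ≤ A + (t / γ)⁻¹ * (2 ^ (n - 1) * v * A * t) := by gcongr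
    _ = (1 + 2 ^ (n - 1) * γ * v) * A := by field_simp
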